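/- arXiv:1607.07174 — 3 statements merged into one kernel-verified Lean document; each statement's English description precedes it below -/
import Mathlib

section
/- For all integers k ≥ 1 and n ≥ 1 there exists a finite simple graph G with f_k(G) ≤ 3 and f_{k+1}(G) ≥ n. -/
open scoped Classical
open scoped Function

namespace InducedArboricity

/-- The edges of the subgraph of `G` induced by vertex set `S`, viewed as edges of `G`. -/
def forestEdges {V : Type*} (G : SimpleGraph V) (S : Set V) : Set (Sym2 V) :=
  {e | e ∈ G.edgeSet ∧ ∀ x ∈ e, x ∈ S}

/-- The number of edges of the connected component of `v` in `H`. -/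
noncomputable def compEdgeCount {W : Type*} (H : SimpleGraph W) (v : W) : ℕ :=
  {e | e ∈ H.edgeSet ∧ ∀ x ∈ e, H.Reachable v x}.ncard

/-- `S` induces a `k`-strong forest in `G`: the induced subgraph is acyclic and each of its
connected components has at least `k` edges. -/
def IsStrongForest {V : Type*} (G : SimpleGraph V) (k : ℕ) (S : Set V) : Prop :=
  (G.induce S).IsAcyclic ∧ ∀ v : S, k ≤ compEdgeCount (G.induce S) v

/-- An edge `e` of `G` is `k`-valid if it lies in some `k`-strong forest of `G`. -/
def KValid {V : Type*} (G : SimpleGraph V) (k : ℕ) (e : Sym2 V) : Prop :=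
  ∃ S : Set V, IsStrongForest G k S ∧ e ∈ forestEdges G S

/-- The `k`-strong induced arboricity: the least number of `k`-strong forests of `G`
covering all `k`-valid edges of `G`. -/
noncomputable def fStrong {V : Type*} (G : SimpleGraph V) (k : ℕ) : ℕ :=
  sInf {N | ∃ F : Fin N → Set V,
    (∀ i, IsStrongForest G k (F i)) ∧
    ∀ e : Sym2 V, KValid G k e → ∃ i, e ∈ forestEdges G (F i)}

/-- `G` is a `d`-shallow minor of `H`. -/
def IsShallowMinor {V W : Type*} (d : ℕ) (G : SimpleGraph V) (H : SimpleGraph W) : Prop :=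
  ∃ B : V → Set W,
    Pairwise (Disjoint on B) ∧
    (∀ v, ∃ c : B v, ∀ y : B v,
      (H.induce (B v)).Reachable c y ∧ (H.induce (B v)).dist c y ≤ d) ∧
    (∀ u v, G.Adj u v → ∃ x ∈ B u, ∃ y ∈ B v, H.Adj x y)

/-- A class of finite simple graphs, one set of graphs for each number of vertices. -/
def GraphClass : Type :=
  ∀ n : ℕ, Set (SimpleGraph (Fin n))

/-- A class of graphs has bounded expansion if for every `d` there is a constant `a` such that
every `d`-shallow minor of a member of the class has at most `a` times as many edges
as vertices. -/
def BoundedExpansion (C : GraphClass) : Prop :=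
  ∀ d : ℕ, ∃ a : ℕ, ∀ (m : ℕ) (G : SimpleGraph (Fin m)),
    (∃ n : ℕ, ∃ H ∈ C n, IsShallowMinor d G H) → G.edgeSet.ncard ≤ a * m

/-- A class of graphs is nowhere dense if for every `d` some graph is not a `d`-shallow minor
of any member of the class. -/
def NowhereDense (C : GraphClass) : Prop :=
  ∀ d : ℕ, ∃ (m : ℕ) (G : SimpleGraph (Fin m)), ¬ ∃ n : ℕ, ∃ H ∈ C n, IsShallowMinor d G H

/-- The closed neighborhood of `v` in `G`. -/
def closedNbr {V : Type*} (G : SimpleGraph V) (v : V) : Set V :=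
  insert v (G.neighborSet v)

/-- The sum of the labels over the closed neighborhood of `v`. -/
noncomputable def closedNbrSum {V : Type*} [Fintype V] (G : SimpleGraph V)
    (f : V → ℕ) (v : V) : ℕ :=
  ∑ x : V, if x ∈ closedNbr G v then f x else 0

/-- A labeling is distinguishing if adjacent vertices with different closed neighborhoods
receive different label sums over their closed neighborhoods. -/
def Distinguishing {V : Type*} [Fintype V] (G : SimpleGraph V) (f : V → ℕ) : Prop :=
  ∀ u v : V, G.Adj u v → closedNbr G u ≠ closedNbr G v →
    closedNbrSum G f u ≠ closedNbrSum G f v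

/-- The adjacent closed vertex-distinguishing number of `G`. -/
noncomputable def disNumber {V : Type*} [Fintype V] (G : SimpleGraph V) : ℕ :=
  sInf {L | 1 ≤ L ∧ ∃ f : V → ℕ, (∀ v, 1 ≤ f v ∧ f v ≤ L) ∧ Distinguishing G f}

/-- A proper coloring in which any two color classes together induce a forest. -/
def IsAcyclicColoring {V : Type*} (G : SimpleGraph V) {m : ℕ} (c : V → Fin m) : Prop :=
  (∀ u v : V, G.Adj u v → c u ≠ c v) ∧
  ∀ i j : Fin m, (G.induce {v | c v = i ∨ c v = j}).IsAcyclic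

/-- The acyclic chromatic number of `G`. -/
noncomputable def chiAcyc {V : Type*} (G : SimpleGraph V) : ℕ :=
  sInf {m | ∃ c : V → Fin m, IsAcyclicColoring G c}

/-- The edge arboricity of `G`: the least number of (not necessarily induced) forests
covering all edges of `G`. -/
noncomputable def arboricity {V : Type*} (G : SimpleGraph V) : ℕ :=
  sInf {N | ∃ F : Fin N → SimpleGraph V,
    (∀ i, F i ≤ G ∧ (F i).IsAcyclic) ∧
    ∀ e ∈ G.edgeSet, ∃ i, e ∈ (F i).edgeSet}

/-- `G` admits a tree decomposition of width at most `t`. -/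
def HasTreewidthAtMost {V : Type*} (G : SimpleGraph V) (t : ℕ) : Prop :=
  ∃ (ι : Type) (T : SimpleGraph ι) (B : ι → Finset V),
    T.IsTree ∧
    (∀ e ∈ G.edgeSet, ∃ i, ∀ x ∈ e, x ∈ B i) ∧
    (∀ v : V, (T.induce {i | v ∈ B i}).Connected) ∧
    (∀ i, (B i).card ≤ t + 1)

/-- The tree-width of `G`. -/
noncomputable def treewidth {V : Type*} (G : SimpleGraph V) : ℕ :=
  sInf {t | HasTreewidthAtMost G t}

/-- `G` has tree-depth at most `d`: there is a "forest order" on the vertices (the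
ancestor order of a rooted spanning forest) in which ancestor sets are chains of at most
`d` vertices and endpoints of edges of `G` are comparable.  Equivalently, every connected
component of `G` is a subgraph of the transitive closure of a rooted tree of depth `d`. -/
def HasTreedepthAtMost {V : Type*} (G : SimpleGraph V) (d : ℕ) : Prop :=
  ∃ le : V → V → Prop, IsPartialOrder V le ∧
    (∀ v : V, IsChain le {u | le u v}) ∧
    (∀ u v : V, G.Adj u v → le u v ∨ le v u) ∧
    (∀ v : V, {u | le u v}.ncard ≤ d)

/-- The tree-depth of `G`. -/
noncomputable def treedepth {V : Type*} (G : SimpleGraph V) : ℕ :=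
  sInf {d | HasTreedepthAtMost G d}

/-- `G` is a minor of `H`, witnessed by disjoint connected branch sets. -/
def IsMinorOf {V W : Type*} (G : SimpleGraph V) (H : SimpleGraph W) : Prop :=
  ∃ B : V → Set W,
    Pairwise (Disjoint on B) ∧
    (∀ v, (B v).Nonempty) ∧
    (∀ v, (H.induce (B v)).Connected) ∧
    (∀ u v, G.Adj u v → ∃ x ∈ B u, ∃ y ∈ B v, H.Adj x y)

/-- A class of graphs closed under taking minors. -/
def MinorClosed (C : GraphClass) : Prop :=
  ∀ (m n : ℕ) (G : SimpleGraph (Fin m)) (H : SimpleGraph (Fin n)),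
    H ∈ C n → IsMinorOf G H → G ∈ C m

/-- Planarity, via Wagner's characterization: no `K₅` and no `K₃,₃` minor. -/
def IsPlanar {V : Type*} (G : SimpleGraph V) : Prop :=
  ¬ IsMinorOf (SimpleGraph.completeGraph (Fin 5)) G ∧
  ¬ IsMinorOf (completeBipartiteGraph (Fin 3) (Fin 3)) G

/-!
Join every ordered pair `(i, j)` of hubs by a path hub – center – port – hub and attach pendant
leaves to the center until, apart from the hub `i`, it has exactly `k` neighbours. Every edge lies
in one of three unions of stars with at least `k` edges each: around the centers without the ports,
around the centers without the hubs, and around the hubs using only the ports. Hence `f_k ≤ 3`.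

Each center–port edge with `i ≠ j` is `(k + 1)`-valid, but a `(k + 1)`-strong forest `F` containing
it must also contain hub `i` or hub `j`, since the star without the hubs has only `k` edges. If it
contains both, they are joined in `F` by a path of length three, so they get different colours in a
proper 2-colouring of `F`. Recording for each hub whether it is missing from `F` or which colour it
has, the hubs are therefore separated by the `3 ^ f_{k+1}` possible records.
-/

theorem isAcyclic_of_unique_adj_le {V α : Type*} [LinearOrder α] {G : SimpleGraph V} (r : V → α)
    (h : ∀ u v w, G.Adj u v → G.Adj u w → r v ≤ r u → r w ≤ r u → v = w) : G.IsAcyclic := by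
  intro a c hc
  -- A vertex of maximal rank on a cycle has two distinct neighbours of no larger rank.
  obtain ⟨u, hu, hmax⟩ := c.support.toFinset.exists_maximalFor r ⟨a, by simp⟩
  rw [List.mem_toFinset] at hu
  have hle (n : ℕ) : r ((c.rotate u hu).getVert n) ≤ r u :=
    (le_total _ _).elim id <| hmax <| by
      simpa using (c.mem_support_rotate_iff u hu).1 ((c.rotate u hu).getVert_mem_support n)
  have hcycle := hc.rotate hu
  exact hcycle.snd_ne_penultimate <| h u _ _ (SimpleGraph.Walk.adj_snd hcycle.not_nil)
    (SimpleGraph.Walk.adj_penultimate hcycle.not_nil).symm (hle _) (hle _)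

theorem card_le_ncard_of_injective {σ V : Type*} [Finite V] {s : Set V} {f : σ → V}
    (hf : f.Injective) (hs : ∀ x, f x ∈ s) : Nat.card σ ≤ s.ncard := by
  rw [← Set.ncard_range_of_injective hf]
  exact Set.ncard_le_ncard (Set.range_subset_iff.2 hs)

section CompEdgeCount

variable {V W : Type*} {G : SimpleGraph V} {H : SimpleGraph W}

theorem compEdgeCount_congr (φ : G ≃g H) (v : V) : compEdgeCount G v = compEdgeCount H (φ v) := by
  rw [compEdgeCount, compEdgeCount, ← Set.ncard_preimage_of_injective_subset_range
    (Sym2.map.injective φ.injective) fun e _ ↦ ⟨e.map φ.symm, by simp [Sym2.map_map]⟩]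
  congr 1
  ext e
  induction e with
  | h a b => simp [SimpleGraph.Iso.reachable_iff, φ.map_adj_iff]

theorem ncard_incidenceSet (v : V) : (G.incidenceSet v).ncard = (G.neighborSet v).ncard :=
  Nat.card_congr (G.incidenceSetEquivNeighborSet v)

theorem ncard_neighborSet_le_compEdgeCount [Finite V] {v c : V} (hv : G.Reachable v c) :
    (G.neighborSet c).ncard ≤ compEdgeCount G v := by
  rw [← ncard_incidenceSet]
  refine Set.ncard_le_ncard ?_
  rintro e ⟨he, hc⟩
  obtain ⟨x, rfl⟩ := hc
  have hcx : G.Adj c x := he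
  exact ⟨he, by simp [hv, hv.trans hcx.reachable]⟩

theorem compEdgeCount_eq_of_isolated_star {c : V} (h : ∀ x y, G.Adj c x → G.Adj x y → y = c) :
    compEdgeCount G c = (G.neighborSet c).ncard := by
  have hreach {x : V} (hx : G.Reachable c x) : x = c ∨ G.Adj c x := by
    rw [SimpleGraph.reachable_iff_reflTransGen] at hx
    induction hx with
    | refl => exact .inl rfl
    | tail _ hxy ih =>
      rcases ih with rfl | hcx
      · exact .inr hxy
      · exact .inl (h _ _ hcx hxy)
  rw [← ncard_incidenceSet, compEdgeCount]
  congr 1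
  ext e
  induction e with
  | h a b =>
    simp only [SimpleGraph.incidenceSet, SimpleGraph.mem_edgeSet, Sym2.mem_iff, Set.mem_ofPred_eq,
      forall_eq_or_imp, forall_eq]
    refine and_congr_right fun hab ↦ ⟨fun ⟨ha, _⟩ ↦ ?_, ?_⟩
    · rcases hreach ha with rfl | hca
      · exact .inl rfl
      · exact .inr (h _ _ hca hab).symm
    · rintro (rfl | rfl)
      · exact ⟨.rfl, hab.reachable⟩
      · exact ⟨hab.symm.reachable, .rfl⟩

theorem ncard_neighborSet_induce (S : Set V) (c : S) :
    ((G.induce S).neighborSet c).ncard = (G.neighborSet c ∩ S).ncard := by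
  rw [← Set.ncard_image_of_injective _ Subtype.val_injective]
  congr 1
  ext x
  simp

end CompEdgeCount

section StrongForest

variable {V W τ : Type*} {G : SimpleGraph V} {H : SimpleGraph W} {k : ℕ} {S : Set V}

theorem IsStrongForest.of_star_cover [Finite V] (hS : (G.induce S).IsAcyclic)
    (hstar : ∀ v ∈ S, ∃ c ∈ S, (v = c ∨ G.Adj c v) ∧ k ≤ (G.neighborSet c ∩ S).ncard) :
    IsStrongForest G k S := by
  refine ⟨hS, fun ⟨v, hv⟩ ↦ ?_⟩
  obtain ⟨c, hc, hvc, hk⟩ := hstar v hv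
  have hreach : (G.induce S).Reachable ⟨v, hv⟩ ⟨c, hc⟩ := by
    rcases hvc with rfl | hadj
    · exact .rfl
    · exact (SimpleGraph.induce_adj.2 hadj.symm).reachable
  rw [← ncard_neighborSet_induce S ⟨c, hc⟩] at hk
  exact hk.trans (ncard_neighborSet_le_compEdgeCount hreach)

theorem IsStrongForest.le_ncard_of_isolated_star (hS : IsStrongForest G k S) {c : V} (hc : c ∈ S)
    (h : ∀ x ∈ S, ∀ y ∈ S, G.Adj c x → G.Adj x y → y = c) : k ≤ (G.neighborSet c ∩ S).ncard := by
  rw [← ncard_neighborSet_induce S ⟨c, hc⟩, ← compEdgeCount_eq_of_isolated_star]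
  · exact hS.2 _
  · exact fun x y hcx hxy ↦ Subtype.ext (h x x.2 y y.2 hcx hxy)

theorem IsStrongForest.mono {l : ℕ} (hkl : k ≤ l) (hS : IsStrongForest G l S) :
    IsStrongForest G k S :=
  ⟨hS.1, fun v ↦ hkl.trans (hS.2 v)⟩

theorem IsStrongForest.preimage (φ : G ≃g H) {T : Set W} (hT : IsStrongForest H k T) :
    IsStrongForest G k (φ ⁻¹' T) := by
  let ψ := φ.induce (φ.toEquiv.bijOn (s := φ ⁻¹' T) (t := T) fun _ ↦ Iff.rfl)
  exact ⟨ψ.isAcyclic_iff.2 hT.1, fun v ↦ (hT.2 (ψ v)).trans_eq (compEdgeCount_congr ψ v).symm⟩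

theorem mk_mem_forestEdges {u v : V} :
    s(u, v) ∈ forestEdges G S ↔ G.Adj u v ∧ u ∈ S ∧ v ∈ S := by
  simp [forestEdges]

theorem map_mem_forestEdges_iff (φ : G ≃g H) (T : Set W) (e : Sym2 V) :
    e.map φ ∈ forestEdges H T ↔ e ∈ forestEdges G (φ ⁻¹' T) := by
  induction e with
  | h a b => simp [mk_mem_forestEdges, φ.map_adj_iff]

theorem KValid.map (φ : G ≃g H) {e : Sym2 V} (he : KValid G k e) : KValid H k (e.map φ) := by
  obtain ⟨S, hS, heS⟩ := he
  refine ⟨φ.symm ⁻¹' S, hS.preimage φ.symm, ?_⟩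
  rw [map_mem_forestEdges_iff, ← Set.preimage_comp]
  simpa using heS

/-- A family of `k`-strong forests of `G` covering all `k`-valid edges, as counted by `fStrong`. -/
def IsStrongForestCover (G : SimpleGraph V) (k : ℕ) (F : τ → Set V) : Prop :=
  (∀ t, IsStrongForest G k (F t)) ∧ ∀ e, KValid G k e → ∃ t, e ∈ forestEdges G (F t)

theorem IsStrongForestCover.preimage (φ : G ≃g H) {F : τ → Set W}
    (hF : IsStrongForestCover H k F) : IsStrongForestCover G k (fun t ↦ φ ⁻¹' F t) := by
  refine ⟨fun t ↦ (hF.1 t).preimage φ, fun e he ↦ ?_⟩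
  obtain ⟨t, ht⟩ := hF.2 _ (he.map φ)
  exact ⟨t, (map_mem_forestEdges_iff φ _ e).1 ht⟩

theorem fStrong_congr (φ : G ≃g H) (k : ℕ) : fStrong G k = fStrong H k := by
  refine congrArg sInf (Set.ext fun N ↦ ⟨?_, ?_⟩)
  · rintro ⟨F, hF⟩
    exact ⟨_, IsStrongForestCover.preimage φ.symm hF⟩
  · rintro ⟨F, hF⟩
    exact ⟨_, IsStrongForestCover.preimage φ hF⟩

theorem IsStrongForestCover.fStrong_le {N : ℕ} {F : Fin N → Set V}
    (hF : IsStrongForestCover G k F) : fStrong G k ≤ N :=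
  Nat.sInf_le ⟨F, hF⟩

theorem exists_isStrongForestCover_fStrong [Finite V] (G : SimpleGraph V) (k : ℕ) :
    ∃ F : Fin (fStrong G k) → Set V, IsStrongForestCover G k F := by
  choose F hF hmem using fun e : {e // KValid G k e} ↦ e.2
  obtain ⟨N, ⟨ε⟩⟩ := Finite.exists_equiv_fin {e // KValid G k e}
  refine Nat.sInf_mem (s := {N | ∃ F : Fin N → Set V, IsStrongForestCover G k F})
    ⟨N, F ∘ ε.symm, fun _ ↦ hF _, fun e he ↦ ⟨ε ⟨e, he⟩, ?_⟩⟩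
  simpa using hmem ⟨e, he⟩

end StrongForest

/-- The vertices of `starSubdivision`: hubs indexed by `ι` and, for each ordered pair of hubs, a
center with its leaves indexed by `κ`. -/
inductive StarVertex (ι κ : Type*)
  | hub (i : ι)
  | center (i j : ι)
  | leaf (i j : ι) (t : κ)

namespace StarVertex

variable {ι κ : Type*}

instance [Finite ι] [Finite κ] : Finite (StarVertex ι κ) :=
  Finite.of_surjective
    (Sum.elim hub (Sum.elim (fun p : ι × ι ↦ center p.1 p.2) fun p : ι × ι × κ ↦
      leaf p.1 p.2.1 p.2.2))
    (by rintro (i | ⟨i, j⟩ | ⟨i, j, t⟩) <;> simp)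

/-- The edges of `starSubdivision`, oriented along the directed path from hub `i` to hub `j` and
from each center to its leaves. -/
def Arc (t₀ : κ) : StarVertex ι κ → StarVertex ι κ → Prop
  | hub i, center i' _ => i = i'
  | center i j, leaf i' j' _ => i = i' ∧ j = j'
  | leaf _ j t, hub j' => j = j' ∧ t = t₀
  | _, _ => False

/-- The graph in which each ordered pair `(i, j)` of hubs is joined by the path
`hub i — center i j — leaf i j t₀ — hub j`, and the center carries further pendant leaves, one for
each `t ≠ t₀`. The leaves `leaf i j t₀` are called ports. Pairs with `i = j` are included, so that
every hub is adjacent to a center. -/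
def starSubdivision (t₀ : κ) : SimpleGraph (StarVertex ι κ) :=
  .fromRel (Arc t₀)

variable {t₀ : κ} {S : Set (StarVertex ι κ)} {i j : ι} {t : κ} {v : StarVertex ι κ}

@[simp]
theorem hub_adj_iff : (starSubdivision t₀).Adj (hub i) v ↔
    (∃ j, v = center i j) ∨ ∃ j, v = leaf j i t₀ := by
  cases v <;> grind [starSubdivision, Arc, SimpleGraph.fromRel_adj]

@[simp]
theorem center_adj_iff : (starSubdivision t₀).Adj (center i j) v ↔
    v = hub i ∨ ∃ t, v = leaf i j t := by
  cases v <;> grind [starSubdivision, Arc, SimpleGraph.fromRel_adj]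

@[simp]
theorem leaf_adj_iff : (starSubdivision t₀).Adj (leaf i j t) v ↔
    v = center i j ∨ v = hub j ∧ t = t₀ := by
  cases v <;> grind [starSubdivision, Arc, SimpleGraph.fromRel_adj]

/-- The rank in which a vertex of `starSubdivision` has at most one neighbour of no larger rank,
except that ports have two. -/
def height : StarVertex ι κ → ℕ
  | hub _ => 0
  | center _ _ => 1
  | leaf _ _ _ => 2

theorem isAcyclic_induce_starSubdivision
    (hS : ∀ i j, center i j ∈ S → leaf i j t₀ ∈ S → hub j ∉ S) :
    ((starSubdivision t₀).induce S).IsAcyclic := by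
  refine isAcyclic_of_unique_adj_le (fun v ↦ height v.1) ?_
  rintro ⟨u, hu⟩ ⟨v, hv⟩ ⟨w, hw⟩ huv huw hvu hwu
  simp only [SimpleGraph.induce_adj] at huv huw
  rw [Subtype.mk.injEq]
  rcases u with i | ⟨i, j⟩ | ⟨i, j, t⟩
  · rcases hub_adj_iff.1 huv with ⟨_, rfl⟩ | ⟨_, rfl⟩ <;> simp [height] at hvu
  · have eq_hub {x} (hx : (starSubdivision t₀).Adj (center i j) x) (hle : height x ≤ 1) :
        x = hub i := by
      rcases center_adj_iff.1 hx with rfl | ⟨_, rfl⟩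
      · rfl
      · simp [height] at hle
    exact (eq_hub huv hvu).trans (eq_hub huw hwu).symm
  · rcases leaf_adj_iff.1 huv with rfl | ⟨rfl, rfl⟩ <;>
      rcases leaf_adj_iff.1 huw with rfl | ⟨rfl, h⟩
    · rfl
    · exact absurd hw (hS i j hv (h ▸ hu))
    · exact absurd hv (hS i j hw hu)
    · rfl

/-- The vertices that are not ports; they induce trees consisting of a hub and the stars around its
centers. -/
def portless (t₀ : κ) : Set (StarVertex ι κ) := {v | ∀ i j, v ≠ leaf i j t₀}

/-- The hubs and ports, inducing the stars formed by a hub `j` and the ports `leaf i j t₀`. -/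
def hubsAndPorts (t₀ : κ) : Set (StarVertex ι κ) :=
  {v | (∃ i, v = hub i) ∨ ∃ i j, v = leaf i j t₀}

/-- The vertices that are not hubs, inducing the stars formed by a center and its leaves. -/
def hubless : Set (StarVertex ι κ) := (Set.range hub)ᶜ

/-- The star formed by a center together with its leaves and its first hub, which is
`(k + 1)`-strong for `k` leaves. -/
def singleStar (i j : ι) : Set (StarVertex ι κ) :=
  insert (hub i) (insert (center i j) (Set.range (leaf i j)))

theorem edgeSet_subset_union_forestEdges : (starSubdivision (ι := ι) t₀).edgeSet ⊆
    forestEdges (starSubdivision t₀) (portless t₀) ∪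
      forestEdges (starSubdivision t₀) (hubsAndPorts t₀) ∪
      forestEdges (starSubdivision t₀) hubless := by
  intro e he
  induction e with
  | h u v =>
    rcases u with _ | _ | _ <;> rcases v with _ | _ | _ <;>
      simp_all [mk_mem_forestEdges, portless, hubsAndPorts, hubless]

section LargeStrongForest

variable [Finite κ]

theorem hub_mem_or_hub_mem_of_center_mem
    (hS : IsStrongForest (starSubdivision t₀) (Nat.card κ + 1) S) {i j : ι}
    (hc : center i j ∈ S) : hub i ∈ S ∨ hub j ∈ S := by
  by_contra! ⟨hi, hj⟩
  have hle : Nat.card κ + 1 ≤ ((starSubdivision t₀).neighborSet (center i j) ∩ S).ncard := by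
    refine hS.le_ncard_of_isolated_star hc fun x hx y hy hcx hxy ↦ ?_
    obtain rfl | ⟨t, rfl⟩ := center_adj_iff.1 hcx
    · exact absurd hx hi
    · obtain rfl | ⟨rfl, -⟩ := leaf_adj_iff.1 hxy
      · rfl
      · exact absurd hy hj
  have hsub : (starSubdivision t₀).neighborSet (center i j) ∩ S ⊆ Set.range (leaf i j) := by
    rintro x ⟨hcx, hx⟩
    obtain rfl | ⟨t, rfl⟩ := center_adj_iff.1 hcx
    · exact absurd hx hi
    · exact Set.mem_range_self t
  have hcard := Set.ncard_le_ncard hsub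
  rw [Set.ncard_range_of_injective fun _ _ ↦ by simp] at hcard
  omega

theorem exists_hub_labelling (hS : IsStrongForest (starSubdivision t₀) (Nat.card κ + 1) S) :
    ∃ label : ι → Option Bool, ∀ i j,
      s(center i j, leaf i j t₀) ∈ forestEdges (starSubdivision t₀) S → label i ≠ label j := by
  have C : ((starSubdivision t₀).induce S).Coloring Bool := hS.1.colorable_two.toColoring (by simp)
  refine ⟨fun i ↦ if h : hub i ∈ S then some (C ⟨hub i, h⟩) else none, fun i j hij ↦ ?_⟩
  obtain ⟨-, hc, hl⟩ := mk_mem_forestEdges.1 hij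
  have hor := hub_mem_or_hub_mem_of_center_mem hS hc
  by_cases hi : hub i ∈ S
  · by_cases hj : hub j ∈ S
    · have hic : C ⟨hub i, hi⟩ ≠ C ⟨center i j, hc⟩ := C.valid (by simp)
      have hcl : C ⟨center i j, hc⟩ ≠ C ⟨leaf i j t₀, hl⟩ := C.valid (by simp)
      have hlj : C ⟨leaf i j t₀, hl⟩ ≠ C ⟨hub j, hj⟩ := C.valid (by simp)
      simp [hi, hj, Bool.eq_not.2 hic, Bool.eq_not.2 hcl, Bool.eq_not.2 hlj]
    · simp [hi, hj]
  · simp [hi, hor.resolve_left hi]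

end LargeStrongForest

variable [Finite ι] [Finite κ]

theorem isStrongForest_portless :
    IsStrongForest (starSubdivision (ι := ι) t₀) (Nat.card κ) (portless t₀) := by
  refine .of_star_cover (isAcyclic_induce_starSubdivision fun i j _ h ↦ absurd rfl (h i j)) ?_
  have hcard (i j : ι) :
      Nat.card κ ≤ ((starSubdivision t₀).neighborSet (center i j) ∩ portless t₀).ncard := by
    refine card_le_ncard_of_injective (f := Function.update (leaf i j) t₀ (hub i)) ?_ ?_
    · intro s t
      grind [Function.update_apply]
    · intro t
      by_cases ht : t = t₀ <;> simp [ht, portless]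
  rintro (i | ⟨i, j⟩ | ⟨i, j, t⟩) _
  · exact ⟨center i i, by simp [portless], by simp, hcard i i⟩
  · exact ⟨center i j, by simp [portless], by simp, hcard i j⟩
  · exact ⟨center i j, by simp [portless], by simp, hcard i j⟩

theorem isStrongForest_hubsAndPorts :
    IsStrongForest (starSubdivision (ι := ι) t₀) (Nat.card ι) (hubsAndPorts t₀) := by
  refine .of_star_cover (isAcyclic_induce_starSubdivision fun i j h ↦ ?_) ?_
  · simp [hubsAndPorts] at h
  have hcard (j : ι) :
      Nat.card ι ≤ ((starSubdivision t₀).neighborSet (hub j) ∩ hubsAndPorts t₀).ncard :=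
    card_le_ncard_of_injective (f := fun i ↦ leaf i j t₀) (fun _ _ ↦ by simp)
      (by simp [hubsAndPorts])
  rintro _ (⟨j, rfl⟩ | ⟨i, j, rfl⟩)
  · exact ⟨hub j, by simp [hubsAndPorts], by simp, hcard j⟩
  · exact ⟨hub j, by simp [hubsAndPorts], by simp, hcard j⟩

theorem isStrongForest_hubless :
    IsStrongForest (starSubdivision (ι := ι) t₀) (Nat.card κ) hubless := by
  refine .of_star_cover (isAcyclic_induce_starSubdivision fun i j _ _ ↦ by simp [hubless]) ?_
  have hcard (i j : ι) :
      Nat.card κ ≤ ((starSubdivision t₀).neighborSet (center i j) ∩ hubless).ncard :=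
    card_le_ncard_of_injective (f := leaf i j) (fun _ _ ↦ by simp)
      (by simp [hubless])
  rintro (i | ⟨i, j⟩ | ⟨i, j, t⟩) hv
  · simp [hubless] at hv
  · exact ⟨center i j, by simp [hubless], by simp, hcard i j⟩
  · exact ⟨center i j, by simp [hubless], by simp, hcard i j⟩

theorem isStrongForest_singleStar {i j : ι} (hij : i ≠ j) :
    IsStrongForest (starSubdivision t₀) (Nat.card κ + 1) (singleStar i j) := by
  refine .of_star_cover (isAcyclic_induce_starSubdivision ?_) ?_
  · intro i' j' h _
    have : i' = i ∧ j' = j := by simpa [singleStar] using h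
    simp [singleStar, this, hij.symm]
  have hcard : Nat.card κ + 1 ≤
      ((starSubdivision t₀).neighborSet (center i j) ∩ singleStar i j).ncard := by
    rw [← Finite.card_option]
    refine card_le_ncard_of_injective (f := fun t : Option κ ↦ t.elim (hub i) (leaf i j)) ?_ ?_
    · rintro (_ | s) (_ | t) <;> simp
    · rintro (_ | t) <;> simp [singleStar]
  refine fun v hv ↦ ⟨center i j, by simp [singleStar], ?_, hcard⟩
  rcases hv with rfl | rfl | ⟨t, rfl⟩ <;> simp

theorem fStrong_starSubdivision_le_three (t₀ : κ) (h : Nat.card κ ≤ Nat.card ι) :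
    fStrong (starSubdivision (ι := ι) t₀) (Nat.card κ) ≤ 3 := by
  refine IsStrongForestCover.fStrong_le (F := ![portless t₀, hubsAndPorts t₀, hubless]) ⟨?_, ?_⟩
  · intro s
    fin_cases s
    · exact isStrongForest_portless
    · exact isStrongForest_hubsAndPorts.mono h
    · exact isStrongForest_hubless
  · rintro e ⟨_, -, he, -⟩
    rcases edgeSet_subset_union_forestEdges he with (he | he) | he
    exacts [⟨0, he⟩, ⟨1, he⟩, ⟨2, he⟩]

variable (ι) in
theorem card_le_three_pow_fStrong (t₀ : κ) :
    Nat.card ι ≤ 3 ^ fStrong (starSubdivision (ι := ι) t₀) (Nat.card κ + 1) := by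
  obtain ⟨F, hF⟩ := exists_isStrongForestCover_fStrong (starSubdivision (ι := ι) t₀)
    (Nat.card κ + 1)
  choose label hlabel using fun t ↦ exists_hub_labelling (hF.1 t)
  have hinj : Function.Injective fun i t ↦ label t i := by
    intro i j hij
    by_contra hne
    obtain ⟨t, ht⟩ := hF.2 s(center i j, leaf i j t₀) ⟨singleStar i j,
      isStrongForest_singleStar hne, mk_mem_forestEdges.2 (by simp [singleStar])⟩
    exact hlabel t i j ht (congrFun hij t)
  simpa using Nat.card_le_card_of_injective _ hinj

end StarVertex

/-- For all integers `k ≥ 1` and `n ≥ 1` there is a finite simple graph `G`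
with `f_k(G) ≤ 3` and `f_{k+1}(G) ≥ n`. -/
theorem exists_fStrong_le_three_fStrong_succ_ge (k n : ℕ) (hk : 1 ≤ k) (hn : 1 ≤ n) :
    ∃ (m : ℕ) (G : SimpleGraph (Fin m)), fStrong G k ≤ 3 ∧ n ≤ fStrong G (k + 1) := by
  let ι := Fin (3 ^ n + k)
  let t₀ : Fin k := ⟨0, hk⟩
  let G : SimpleGraph (StarVertex ι (Fin k)) := StarVertex.starSubdivision t₀
  have hupper : fStrong G k ≤ 3 := by
    simpa [ι] using StarVertex.fStrong_starSubdivision_le_three (ι := ι) t₀ (by simp [ι])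
  have hcard : 3 ^ n + k ≤ 3 ^ fStrong G (k + 1) := by
    simpa [ι] using StarVertex.card_le_three_pow_fStrong ι t₀
  have hlower : n ≤ fStrong G (k + 1) :=
    (Nat.pow_le_pow_iff_right (by norm_num)).1 ((Nat.le_add_right _ k).trans hcard)
  obtain ⟨m, ⟨e⟩⟩ := Finite.exists_equiv_fin (StarVertex ι (Fin k))
  let φ := SimpleGraph.Iso.map e G
  exact ⟨m, _, (fStrong_congr φ k).symm.trans_le hupper, hlower.trans_eq (fStrong_congr φ _)⟩

end InducedArboricity
end

section
/- For all integers k ≥ 1 and n ≥ 1 there exists a finite simple graph G with f_k(G) ≥ n and f_{k+1}(G) = 0 (i.e., G has no (k+1)-valid edges). -/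
open scoped Classical
open scoped Function

namespace InducedArboricity

/-!
Take a clique on `n + 1` vertices and attach `k - 1` pendant leaves to one of its vertices, the
hub. An induced forest has at most two vertices in the clique, hence at most `k + 1` vertices and
`k` edges, so there are no `(k + 1)`-strong forests. The hub together with its leaves and one
further clique vertex induces a star with `k` edges, so the `n` clique edges at the hub are
`k`-valid; two of them never lie in a common induced forest, because they span a triangle.
-/

section Forests

variable {V : Type*} {G : SimpleGraph V} {S K : Set V} {k : ℕ}

lemma compEdgeCount_le_ncard_edgeSet {W : Type*} [Finite W] (H : SimpleGraph W) (v : W) :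
    compEdgeCount H v ≤ H.edgeSet.ncard :=
  Set.ncard_le_ncard fun _ he => he.1

lemma compEdgeCount_eq_ncard_edgeSet {W : Type*} {H : SimpleGraph W} (hH : H.Preconnected)
    (v : W) : compEdgeCount H v = H.edgeSet.ncard :=
  congrArg Set.ncard <| Set.ext fun _ => and_iff_left fun x _ => hH v x

lemma ncard_edgeSet_lt_card_of_isAcyclic {W : Type*} [Finite W] [Nonempty W]
    {H : SimpleGraph W} (hH : H.IsAcyclic) : H.edgeSet.ncard < Nat.card W := by
  obtain ⟨T, hHT, -, hT⟩ :=
    SimpleGraph.connected_top.exists_isTree_le_of_le_of_isAcyclic (le_top (a := H)) hH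
  calc H.edgeSet.ncard
    _ ≤ T.edgeSet.ncard := Set.ncard_le_ncard (SimpleGraph.edgeSet_mono hHT)
    _ < T.edgeSet.ncard + 1 := Nat.lt_succ_self _
    _ = Nat.card W := (SimpleGraph.isTree_iff_connected_and_card.1 hT).2

lemma IsStrongForest.lt_ncard [Finite S] (hS : IsStrongForest G k S) (hne : S.Nonempty) :
    k < S.ncard := by
  obtain ⟨v, hv⟩ := hne
  have : Nonempty S := ⟨⟨v, hv⟩⟩
  calc k
    _ ≤ compEdgeCount (G.induce S) ⟨v, hv⟩ := hS.2 _
    _ ≤ (G.induce S).edgeSet.ncard := compEdgeCount_le_ncard_edgeSet _ _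
    _ < S.ncard := ncard_edgeSet_lt_card_of_isAcyclic hS.1

lemma isStrongForest_of_isTree (hS : (G.induce S).IsTree) (hk : k < S.ncard) :
    IsStrongForest G k S := by
  have : Finite S := Set.finite_of_ncard_pos (Nat.zero_lt_of_lt hk)
  have hcard : (G.induce S).edgeSet.ncard + 1 = S.ncard :=
    (SimpleGraph.isTree_iff_connected_and_card.1 hS).2
  refine ⟨hS.isAcyclic, fun v => ?_⟩
  rw [compEdgeCount_eq_ncard_edgeSet hS.connected.preconnected]
  omega

lemma not_isAcyclic_induce_of_triangle {a b c : V} (ha : a ∈ S) (hb : b ∈ S) (hc : c ∈ S)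
    (hab : G.Adj a b) (hac : G.Adj a c) (hbc : G.Adj b c) : ¬ (G.induce S).IsAcyclic := by
  intro hS
  refine hS.cliqueFree le_rfl {⟨a, ha⟩, ⟨b, hb⟩, ⟨c, hc⟩} ?_
  rw [SimpleGraph.is3Clique_triple_iff]
  exact ⟨hab, hac, hbc⟩

lemma ncard_inter_le_two_of_isAcyclic [Finite S] (hS : (G.induce S).IsAcyclic)
    (hK : G.IsClique K) : (S ∩ K).ncard ≤ 2 := by
  by_contra! h
  rw [Set.two_lt_ncard] at h
  obtain ⟨a, ha, b, hb, c, hc, hab, hac, hbc⟩ := h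
  exact not_isAcyclic_induce_of_triangle ha.1 hb.1 hc.1
    (hK ha.2 hb.2 hab) (hK ha.2 hc.2 hac) (hK hb.2 hc.2 hbc) hS

lemma ncard_le_of_isAcyclic_of_isClique [Finite V] (hS : (G.induce S).IsAcyclic)
    (hK : G.IsClique K) : S.ncard ≤ Kᶜ.ncard + 2 :=
  calc S.ncard
    _ = (S ∩ K).ncard + (S \ K).ncard := (Set.ncard_inter_add_ncard_sdiff_eq_ncard S K).symm
    _ ≤ 2 + Kᶜ.ncard := add_le_add (ncard_inter_le_two_of_isAcyclic hS hK)
        (Set.ncard_le_ncard fun _ hx => hx.2)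
    _ = Kᶜ.ncard + 2 := add_comm _ _

lemma not_kValid_of_isClique [Finite V] (hK : G.IsClique K) (hk : Kᶜ.ncard + 2 ≤ k)
    (e : Sym2 V) : ¬ KValid G k e := by
  rintro ⟨S, hS, -, heS⟩
  have hlt : k < S.ncard := hS.lt_ncard ⟨_, heS _ e.out_fst_mem⟩
  have hle : S.ncard ≤ Kᶜ.ncard + 2 := ncard_le_of_isAcyclic_of_isClique hS.1 hK
  omega

end Forests

section Covers

variable {V : Type*} {G : SimpleGraph V} {k : ℕ}

lemma fStrong_eq_zero (h : ∀ e, ¬ KValid G k e) : fStrong G k = 0 :=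
  Nat.sInf_eq_zero.2 <| .inl ⟨Fin.elim0, fun i => i.elim0, fun e he => absurd he (h e)⟩

lemma exists_strongForest_cover [Finite V] (G : SimpleGraph V) (k : ℕ) :
    ∃ F : Fin (fStrong G k) → Set V, (∀ i, IsStrongForest G k (F i)) ∧
      ∀ e, KValid G k e → ∃ i, e ∈ forestEdges G (F i) := by
  refine Nat.sInf_mem (s := {N | ∃ F : Fin N → Set V, _}) ?_
  let φ := Finite.equivFin {S : Set V // IsStrongForest G k S}
  refine ⟨_, fun i => (φ.symm i).1, fun i => (φ.symm i).2, ?_⟩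
  rintro e ⟨S, hS, he⟩
  exact ⟨φ ⟨S, hS⟩, by simpa only [Equiv.symm_apply_apply] using he⟩

lemma card_le_fStrong [Finite V] {ι : Type*} {e : ι → Sym2 V} (he : ∀ j, KValid G k (e j))
    (hsep : ∀ S, IsStrongForest G k S → {j | e j ∈ forestEdges G S}.Subsingleton) :
    Nat.card ι ≤ fStrong G k := by
  obtain ⟨F, hF, hcover⟩ := exists_strongForest_cover G k
  choose g hg using fun j => hcover (e j) (he j)
  have hg_inj : Function.Injective g := fun i j hij => hsep _ (hF (g i)) (hg i) (hij ▸ hg j)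
  simpa only [Nat.card_fin] using Nat.card_le_card_of_injective g hg_inj

end Covers

/-- The clique on `insert r C` with every vertex outside it attached as a pendant leaf at the
hub `r`. It is meant for `r ∉ C`, so that there are `Cᶜ.ncard - 1` leaves. -/
def brush {V : Type*} (r : V) (C : Set V) : SimpleGraph V :=
  SimpleGraph.starGraph r ⊔ SimpleGraph.fromEdgeSet C.sym2

section Brush

variable {V : Type*} {r c : V} {C : Set V}

lemma brush_adj {u v : V} :
    (brush r C).Adj u v ↔ u ≠ v ∧ (u = r ∨ v = r ∨ u ∈ C ∧ v ∈ C) := by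
  simp only [brush, SimpleGraph.sup_adj, SimpleGraph.starGraph_adj,
    SimpleGraph.fromEdgeSet_adj, Set.mk_mem_sym2_iff]
  tauto

lemma isClique_brush (r : V) (C : Set V) : (brush r C).IsClique (insert r C) := by
  rintro u (rfl | hu) v (rfl | hv) huv <;> simp_all [brush_adj]

lemma not_kValid_brush [Finite V] (hr : r ∉ C) (e : Sym2 V) :
    ¬ KValid (brush r C) (Cᶜ.ncard + 1) e := by
  have hcompl : (insert r C)ᶜ = Cᶜ \ {r} := by
    rw [Set.insert_eq, Set.compl_union, Set.inter_comm, Set.sdiff_eq]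
  have hleaves : (insert r C)ᶜ.ncard + 1 = Cᶜ.ncard := by
    rw [hcompl, Set.ncard_sdiff_singleton_add_one hr]
  exact not_kValid_of_isClique (isClique_brush r C) (by omega) e

lemma induce_brush_eq_starGraph (hr : r ∉ C) :
    (brush r C).induce (insert c Cᶜ) = SimpleGraph.starGraph ⟨r, .inr hr⟩ := by
  ext ⟨u, hu⟩ ⟨v, hv⟩
  simp only [SimpleGraph.induce_adj, brush_adj, SimpleGraph.starGraph_adj, ne_eq,
    Subtype.mk.injEq]
  grind

lemma isStrongForest_brush [Finite V] (hr : r ∉ C) (hc : c ∈ C) :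
    IsStrongForest (brush r C) Cᶜ.ncard (insert c Cᶜ) := by
  refine isStrongForest_of_isTree ?_ ?_
  · rw [induce_brush_eq_starGraph hr]
    exact SimpleGraph.isTree_starGraph _
  · rw [Set.ncard_insert_of_notMem (not_not_intro hc)]
    exact Nat.lt_succ_self _

lemma kValid_brush [Finite V] (hr : r ∉ C) (hc : c ∈ C) :
    KValid (brush r C) Cᶜ.ncard s(r, c) := by
  refine ⟨_, isStrongForest_brush hr hc, ?_, ?_⟩
  · exact brush_adj.2 ⟨(ne_of_mem_of_not_mem hc hr).symm, .inl rfl⟩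
  · rw [Sym2.ball]
    exact ⟨.inr hr, .inl rfl⟩

lemma ncard_le_fStrong_brush [Finite V] (hr : r ∉ C) :
    C.ncard ≤ fStrong (brush r C) Cᶜ.ncard := by
  refine card_le_fStrong (e := fun c : C => s(r, c.1)) (fun c => kValid_brush hr c.2) ?_
  rintro S ⟨hacyc, -⟩ a ha b hb
  by_contra hab
  have hadj : (brush r C).Adj a b :=
    brush_adj.2 ⟨Subtype.coe_ne_coe.2 hab, .inr <| .inr ⟨a.2, b.2⟩⟩
  exact not_isAcyclic_induce_of_triangle (ha.2 r (Sym2.mem_mk_left _ _))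
    (ha.2 a (Sym2.mem_mk_right _ _)) (hb.2 b (Sym2.mem_mk_right _ _)) ha.1 hb.1 hadj hacyc

end Brush

/-- For all integers `k ≥ 1` and `n ≥ 1` there is a finite simple graph `G`
with `f_k(G) ≥ n` and `f_{k+1}(G) = 0`, i.e. `G` has no `(k+1)`-valid edges. -/
theorem exists_fStrong_ge_fStrong_succ_eq_zero (k n : ℕ) (hk : 1 ≤ k) (hn : 1 ≤ n) :
    ∃ (m : ℕ) (G : SimpleGraph (Fin m)),
      n ≤ fStrong G k ∧ fStrong G (k + 1) = 0 ∧ ∀ e : Sym2 (Fin m), ¬ KValid G (k + 1) e := by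
  obtain ⟨C, -, hC⟩ : ∃ C ⊆ (Set.univ : Set (Fin (k + n))), C.ncard = n :=
    Set.exists_subset_card_eq (by simp)
  have hCc : Cᶜ.ncard = k := by rw [Set.ncard_compl, hC, Nat.card_fin, Nat.add_sub_cancel]
  obtain ⟨r, hr⟩ : Cᶜ.Nonempty := Set.nonempty_of_ncard_ne_zero (by omega)
  have hvalid : ∀ e, ¬ KValid (brush r C) (k + 1) e := by
    simpa only [hCc] using not_kValid_brush hr
  have hle : n ≤ fStrong (brush r C) k := by
    simpa only [hC, hCc] using ncard_le_fStrong_brush hr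
  exact ⟨k + n, brush r C, hle, fStrong_eq_zero hvalid, hvalid⟩
end InducedArboricity
end

section
/- For every finite simple graph G of tree-width t ≥ 2, the induced arboricity satisfies f_1(G) ≤ C(t+1, 2), where C(t+1,2) is the binomial coefficient (t+1 choose 2). -/
open scoped Classical
open scoped Function

namespace InducedArboricity

/-!
In a tree decomposition of width at most `t`, the bags containing a given vertex form a subtree, and
joining any two vertices whose subtrees meet embeds `G` in a chordal graph `H` without
`(t + 2)`-cliques. Removing simplicial vertices one at a time shows that `H` is `t`-degenerate,
hence properly `(t + 1)`-colorable. Two color classes of `H` induce a chordal graph without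
triangles, which is `1`-degenerate and so a forest. Thus `G` has an acyclic `(t + 1)`-coloring, and
the edges of `G` are covered by the forests induced by its pairs of colors, once isolated vertices
are discarded from them.
-/

open Finset SimpleGraph

section Degenerate

variable {V : Type*} {G : SimpleGraph V} {d : ℕ}

/-- `G` is `d`-degenerate: every nonempty finite induced subgraph has a vertex of degree at most
`d`. -/
def IsDegenerate (G : SimpleGraph V) (d : ℕ) : Prop :=
  ∀ W : Finset V, W.Nonempty → ∃ v ∈ W, #{u ∈ W | G.Adj v u} ≤ d

theorem IsDegenerate.exists_coloring_on (hG : IsDegenerate G d) (W : Finset V) :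
    ∃ c : V → Fin (d + 1), ∀ u ∈ W, ∀ v ∈ W, G.Adj u v → c u ≠ c v := by
  induction W using Finset.strongInduction with
  | H W ih =>
    rcases W.eq_empty_or_nonempty with rfl | hW
    · exact ⟨fun _ => 0, by simp⟩
    obtain ⟨v, hv, hdeg⟩ := hG W hW
    obtain ⟨c, hc⟩ := ih (W.erase v) (erase_ssubset hv)
    obtain ⟨k, -, hk⟩ : ∃ k ∈ univ, k ∉ image c {u ∈ W | G.Adj v u} := by
      refine exists_mem_notMem_of_card_lt_card (card_image_le.trans_lt ?_)
      rw [card_univ, Fintype.card_fin]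
      exact Nat.lt_succ_of_le hdeg
    have hck : ∀ u ∈ W, G.Adj v u → c u ≠ k := fun u hu hvu h =>
      hk (mem_image.2 ⟨u, mem_filter.2 ⟨hu, hvu⟩, h⟩)
    refine ⟨Function.update c v k, fun u hu w hw huw => ?_⟩
    by_cases huv : u = v
    · subst huv
      rw [Function.update_self, Function.update_of_ne huw.ne']
      exact (hck w hw huw).symm
    by_cases hwv : w = v
    · subst hwv
      rw [Function.update_self, Function.update_of_ne huv]
      exact hck u hu huw.symm
    rw [Function.update_of_ne huv, Function.update_of_ne hwv]
    exact hc u (mem_erase.2 ⟨huv, hu⟩) w (mem_erase.2 ⟨hwv, hw⟩) huw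

theorem IsDegenerate.colorable [Finite V] (hG : IsDegenerate G d) : G.Colorable (d + 1) := by
  have := Fintype.ofFinite V
  obtain ⟨c, hc⟩ := hG.exists_coloring_on univ
  exact ⟨Coloring.mk c fun {u v} huv => hc u (mem_univ u) v (mem_univ v) huv⟩

theorem IsDegenerate.isAcyclic (hG : IsDegenerate G 1) : G.IsAcyclic := by
  intro s p hp
  obtain ⟨v, hv, hdeg⟩ := hG p.support.toFinset ⟨s, by simp⟩
  have hsub : p.toSubgraph.neighborSet v ⊆ {u ∈ p.support.toFinset | G.Adj v u} := fun u hu => by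
    have hu_support : u ∈ p.support := p.mem_verts_toSubgraph.1 (p.toSubgraph.edge_vert hu.symm)
    simpa using ⟨hu_support, hu.adj_sub⟩
  have hcard := Set.ncard_le_ncard hsub (finite_toSet _)
  rw [hp.ncard_neighborSet_toSubgraph_eq_two (List.mem_toFinset.1 hv), Set.ncard_coe_finset]
    at hcard
  omega

end Degenerate

section Chordal

variable {V : Type*} {G : SimpleGraph V}

/-- `G` is chordal. Rather than by the existence of chords in cycles, this is encoded by Dirac's
criterion: every nonempty finite induced subgraph has a simplicial vertex, that is, one whose
neighbors form a clique. -/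
def IsChordal (G : SimpleGraph V) : Prop :=
  ∀ W : Finset V, W.Nonempty → ∃ v ∈ W, G.IsClique {u ∈ W | G.Adj v u}

theorem IsChordal.induce (hG : IsChordal G) (S : Set V) : IsChordal (G.induce S) := by
  intro W hW
  obtain ⟨v, hv, hclique⟩ := hG (W.map (.subtype _)) hW.map
  obtain ⟨v, hvW, rfl⟩ := mem_map.1 hv
  refine ⟨v, hvW, fun u hu w hw huw => hclique ?_ ?_ (Subtype.coe_injective.ne huw)⟩
  · exact ⟨mem_map_of_mem _ hu.1, hu.2⟩
  · exact ⟨mem_map_of_mem _ hw.1, hw.2⟩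

theorem IsChordal.isDegenerate (hG : IsChordal G) {d : ℕ} (hfree : G.CliqueFree (d + 2)) :
    IsDegenerate G d := by
  intro W hW
  obtain ⟨v, hv, hclique⟩ := hG W hW
  refine ⟨v, hv, not_lt.1 fun hlt => ?_⟩
  have hN : G.IsNClique #{u ∈ W | G.Adj v u} {u ∈ W | G.Adj v u} :=
    ⟨by simpa using hclique, rfl⟩
  exact hfree.mono (by omega) _ (hN.insert (a := v) fun u hu => (mem_filter.1 hu).2)

theorem IsChordal.isAcyclic (hG : IsChordal G) (hfree : G.CliqueFree 3) : G.IsAcyclic :=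
  (hG.isDegenerate hfree).isAcyclic

theorem cliqueFree_three_induce_two_colors {α : Type*} (c : G.Coloring α) (i j : α) :
    (G.induce {v | c v = i ∨ c v = j}).CliqueFree 3 := by
  have b : (G.induce {v | c v = i ∨ c v = j}).Coloring Bool :=
    Coloring.mk (fun v => decide (c v = i)) fun {u v} huv => by
      have hne : c u ≠ c v := c.valid huv
      rw [Ne, decide_eq_decide]
      intro hiff
      by_cases hu : c u = i
      · exact hne (hu.trans (hiff.1 hu).symm)
      · exact hne ((u.2.resolve_left hu).trans (v.2.resolve_left (mt hiff.2 hu)).symm)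
  exact b.colorable.cliqueFree (by simp)

theorem IsChordal.isAcyclicColoring (hG : IsChordal G) {m : ℕ} (c : G.Coloring (Fin m)) :
    IsAcyclicColoring G c :=
  ⟨fun _ _ huv => c.valid huv,
    fun i j => (hG.induce _).isAcyclic (cliqueFree_three_induce_two_colors c i j)⟩

theorem IsAcyclicColoring.anti {H : SimpleGraph V} {m : ℕ} {c : V → Fin m}
    (hc : IsAcyclicColoring H c) (hGH : G ≤ H) : IsAcyclicColoring G c :=
  ⟨fun u v huv => hc.1 u v (hGH huv), fun i j => (hc.2 i j).anti fun _ _ huv => hGH huv⟩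

end Chordal

section Subtrees

variable {ι : Type*} {T : SimpleGraph ι} {A C : Set ι} {a c i j r x : ι}

theorem exists_isPath_support_subset (hA : (T.induce A).Preconnected) (hi : i ∈ A) (hj : j ∈ A) :
    ∃ p : T.Walk i j, p.IsPath ∧ ∀ x ∈ p.support, x ∈ A := by
  obtain ⟨p, hp⟩ := hA.exists_isPath ⟨i, hi⟩ ⟨j, hj⟩
  refine ⟨p.map (Embedding.induce A).toHom, hp.map Subtype.val_injective, fun x hx => ?_⟩
  obtain ⟨y, -, rfl⟩ := List.mem_map.1 (Walk.support_map (Embedding.induce A).toHom p ▸ hx)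
  exact y.2

theorem eq_or_dist_lt_of_mem_support {p : T.Walk a r} (hp : p.length = T.dist a r)
    (hx : x ∈ p.support) : x = a ∨ T.dist x r < T.dist a r := by
  refine or_iff_not_imp_left.2 fun hxa => ?_
  calc T.dist x r ≤ (p.dropUntil x hx).length := dist_le _
    _ < p.length := p.length_dropUntil_lt_length hx hxa
    _ = T.dist a r := hp

theorem mem_support_of_minimalFor_dist (hT : T.IsAcyclic) (hA : (T.induce A).Preconnected)
    (ha : MinimalFor (· ∈ A) (T.dist · r) a) (hi : i ∈ A) (q : T.Walk i r) : a ∈ q.support := by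
  obtain ⟨p, hp, hpA⟩ := exists_isPath_support_subset hA hi ha.prop
  obtain ⟨g, hg, hg_length⟩ := (p.reverse.append q).reachable.exists_path_of_dist
  have hdisj : p.support.Disjoint g.support.tail := by
    intro x hxp hxg
    rcases eq_or_dist_lt_of_mem_support hg_length (List.mem_of_mem_tail hxg) with rfl | hlt
    · have hnodup : (x :: g.support.tail).Nodup := g.cons_tail_support ▸ hg.support_nodup
      exact (List.nodup_cons.1 hnodup).1 hxg
    · exact hlt.not_ge (ha.le (hpA x hxp))
  have hpg : (p.append g).IsPath := by
    rw [Walk.isPath_def, Walk.support_append, List.nodup_append']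
    exact ⟨hp.support_nodup, hg.support_nodup.tail, hdisj⟩
  have := hT.subsingleton_path i r
  have hq : q.bypass = p.append g :=
    congrArg Subtype.val (Subsingleton.elim (⟨_, q.bypass_isPath⟩ : T.Path i r) ⟨_, hpg⟩)
  apply q.support_bypass_subset_support
  rw [hq, Walk.mem_support_append_iff]
  exact Or.inl p.end_mem_support

theorem mem_of_minimalFor_dist (hT : T.IsAcyclic) (hA : (T.induce A).Preconnected)
    (hC : (T.induce C).Preconnected) (ha : MinimalFor (· ∈ A) (T.dist · r) a)
    (hAC : (A ∩ C).Nonempty) (hc : c ∈ C) (hcr : T.Reachable c r)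
    (hdist : T.dist c r ≤ T.dist a r) : a ∈ C := by
  obtain ⟨i, hiA, hiC⟩ := hAC
  obtain ⟨q, -, hqC⟩ := exists_isPath_support_subset hC hiC hc
  obtain ⟨g, -, hg_length⟩ := hcr.exists_path_of_dist
  have ha_mem := mem_support_of_minimalFor_dist hT hA ha hiA (q.append g)
  rcases (Walk.mem_support_append_iff q g).1 ha_mem with haq | hag
  · exact hqC a haq
  · rcases eq_or_dist_lt_of_mem_support hg_length hag with rfl | hlt
    · exact hc
    · exact absurd hdist hlt.not_ge

end Subtrees

section IntersectionGraph

variable {V ι : Type*} {T : SimpleGraph ι} {A : V → Set ι}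

/-- The intersection graph of a family of sets: distinct indices are adjacent when their sets meet.
By Gavril's theorem, the finite chordal graphs are those of families of subtrees of a tree. -/
def intersectionGraph (A : V → Set ι) : SimpleGraph V where
  Adj u v := u ≠ v ∧ (A u ∩ A v).Nonempty
  symm := ⟨fun u v h => ⟨h.1.symm, Set.inter_comm (A u) (A v) ▸ h.2⟩⟩

theorem intersectionGraph_adj {u v : V} :
    (intersectionGraph A).Adj u v ↔ u ≠ v ∧ (A u ∩ A v).Nonempty :=
  .rfl

-- Root the tree anywhere and pick the subtree whose node closest to the root is deepest.
theorem exists_mem_forall_inter_nonempty_imp_mem (hT : T.IsTree)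
    (hA : ∀ v, (T.induce (A v)).Connected) {W : Finset V} (hW : W.Nonempty) :
    ∃ v ∈ W, ∃ i ∈ A v, ∀ u ∈ W, (A v ∩ A u).Nonempty → i ∈ A u := by
  obtain ⟨r⟩ := hT.connected.nonempty
  have hroot (v : V) : ∃ a, MinimalFor (· ∈ A v) (T.dist · r) a :=
    exists_minimalFor_of_wellFoundedLT _ _ (Set.nonempty_coe_sort.1 (hA v).nonempty)
  choose root hroot using hroot
  obtain ⟨v, hv, hmax⟩ := W.exists_max_image (fun v => T.dist (root v) r) hW
  exact ⟨v, hv, root v, (hroot v).prop, fun u hu hvu =>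
    mem_of_minimalFor_dist hT.isAcyclic (hA v).preconnected (hA u).preconnected (hroot v) hvu
      (hroot u).prop (hT.connected _ _) (hmax u hu)⟩

theorem isChordal_intersectionGraph (hT : T.IsTree) (hA : ∀ v, (T.induce (A v)).Connected) :
    IsChordal (intersectionGraph A) := by
  intro W hW
  obtain ⟨v, hv, i, -, hi⟩ := exists_mem_forall_inter_nonempty_imp_mem hT hA hW
  refine ⟨v, hv, fun u ⟨hu, hvu⟩ w ⟨hw, hvw⟩ huw => intersectionGraph_adj.2 ⟨huw, i, ?_, ?_⟩⟩
  · exact hi u hu (intersectionGraph_adj.1 hvu).2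
  · exact hi w hw (intersectionGraph_adj.1 hvw).2

theorem exists_forall_mem_of_isClique_intersectionGraph (hT : T.IsTree)
    (hA : ∀ v, (T.induce (A v)).Connected) {W : Finset V}
    (hW : (intersectionGraph A).IsClique W) : ∃ i, ∀ u ∈ W, i ∈ A u := by
  rcases W.eq_empty_or_nonempty with rfl | hne
  · obtain ⟨r⟩ := hT.connected.nonempty
    exact ⟨r, by simp⟩
  obtain ⟨v, hv, i, hiv, hi⟩ := exists_mem_forall_inter_nonempty_imp_mem hT hA hne
  refine ⟨i, fun u hu => ?_⟩
  rcases eq_or_ne v u with rfl | hvu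
  · exact hiv
  · exact hi u hu (intersectionGraph_adj.1 (hW hv hu hvu)).2

end IntersectionGraph

section Treewidth

variable {V : Type*} {G : SimpleGraph V} {t : ℕ}

theorem hasTreewidthAtMost_card [Fintype V] (G : SimpleGraph V) :
    HasTreewidthAtMost G (Fintype.card V) := by
  refine ⟨Unit, ⊥, fun _ => univ, .of_subsingleton, fun _ _ => ⟨(), by simp⟩, fun v => ?_,
    fun _ => by simp⟩
  have : Nonempty {i : Unit | v ∈ univ} := ⟨⟨(), mem_univ v⟩⟩
  exact .of_subsingleton

theorem hasTreewidthAtMost_treewidth [Finite V] (G : SimpleGraph V) :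
    HasTreewidthAtMost G (treewidth G) := by
  have := Fintype.ofFinite V
  exact Nat.sInf_mem (s := {t | HasTreewidthAtMost G t}) ⟨_, hasTreewidthAtMost_card G⟩

theorem HasTreewidthAtMost.exists_isChordal (hG : HasTreewidthAtMost G t) :
    ∃ H : SimpleGraph V, G ≤ H ∧ IsChordal H ∧ H.CliqueFree (t + 2) := by
  obtain ⟨ι, T, B, hT, hedge, hconn, hcard⟩ := hG
  refine ⟨intersectionGraph fun v => {i | v ∈ B i}, fun u v huv => ?_,
    isChordal_intersectionGraph hT hconn, fun W hW => ?_⟩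
  · obtain ⟨i, hi⟩ := hedge s(u, v) huv
    exact intersectionGraph_adj.2
      ⟨huv.ne, i, hi u (Sym2.mem_mk_left u v), hi v (Sym2.mem_mk_right u v)⟩
  · obtain ⟨i, hi⟩ := exists_forall_mem_of_isClique_intersectionGraph hT hconn hW.isClique
    have hWB : #W ≤ #(B i) := card_le_card hi
    have := hcard i
    have := hW.card_eq
    omega

theorem HasTreewidthAtMost.exists_isAcyclicColoring [Finite V] (hG : HasTreewidthAtMost G t) :
    ∃ c : V → Fin (t + 1), IsAcyclicColoring G c := by
  obtain ⟨H, hGH, hH, hfree⟩ := hG.exists_isChordal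
  obtain ⟨c⟩ := (hH.isDegenerate hfree).colorable
  exact ⟨c, (hH.isAcyclicColoring c).anti hGH⟩

end Treewidth

section StrongForests

variable {V : Type*} {G : SimpleGraph V}

theorem isStrongForest_one_of_forall_exists_adj [Finite V] {S : Set V}
    (hS : (G.induce S).IsAcyclic) (hadj : ∀ v ∈ S, ∃ u ∈ S, G.Adj v u) :
    IsStrongForest G 1 S := by
  refine ⟨hS, fun v => ?_⟩
  obtain ⟨u, hu, hvu⟩ := hadj v v.2
  have hvu : (G.induce S).Adj v ⟨u, hu⟩ := hvu
  refine (Set.ncard_pos).2 ⟨s(v, ⟨u, hu⟩), hvu, fun x hx => ?_⟩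
  rcases Sym2.mem_iff.1 hx with rfl | rfl
  · exact .refl _
  · exact hvu.reachable

theorem fStrong_le_card {k : ℕ} {ι : Type*} [Fintype ι] {F : ι → Set V}
    (hF : ∀ i, IsStrongForest G k (F i))
    (hcover : ∀ e, KValid G k e → ∃ i, e ∈ forestEdges G (F i)) :
    fStrong G k ≤ Fintype.card ι := by
  refine Nat.sInf_le ⟨F ∘ (Fintype.equivFin ι).symm, fun n => hF _, fun e he => ?_⟩
  obtain ⟨i, hi⟩ := hcover e he
  exact ⟨Fintype.equivFin ι i, by simpa using hi⟩

/-- The vertices with a color in the pair `p` that have a neighbor with a color in `p`: they induce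
the subgraph spanned by two color classes, without its isolated vertices. -/
def bichromaticPart {α : Type*} (G : SimpleGraph V) (c : V → α) (p : Sym2 α) : Set V :=
  {v | c v ∈ p ∧ ∃ u, G.Adj v u ∧ c u ∈ p}

theorem mem_forestEdges_bichromaticPart {α : Type*} (c : V → α) {e : Sym2 V}
    (he : e ∈ G.edgeSet) : e ∈ forestEdges G (bichromaticPart G c (e.map c)) := by
  induction e with
  | h u v =>
    have huv : G.Adj u v := he
    refine ⟨he, fun x hx => ?_⟩
    rcases Sym2.mem_iff.1 hx with rfl | rfl
    · exact ⟨Sym2.mem_mk_left _ _, v, huv, Sym2.mem_mk_right _ _⟩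
    · exact ⟨Sym2.mem_mk_right _ _, u, huv.symm, Sym2.mem_mk_left _ _⟩

theorem IsAcyclicColoring.isStrongForest_one_bichromaticPart [Finite V] {m : ℕ} {c : V → Fin m}
    (hc : IsAcyclicColoring G c) (p : Sym2 (Fin m)) :
    IsStrongForest G 1 (bichromaticPart G c p) := by
  induction p with
  | h i j =>
    have hsub : bichromaticPart G c s(i, j) ⊆ {v | c v = i ∨ c v = j} :=
      fun v hv => Sym2.mem_iff.1 hv.1
    refine isStrongForest_one_of_forall_exists_adj
      ((hc.2 i j).embedding (G.induceHomOfLE hsub)) ?_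
    rintro v ⟨hv, u, hvu, hu⟩
    exact ⟨u, ⟨hu, v, hvu.symm, hv⟩, hvu⟩

theorem IsAcyclicColoring.fStrong_one_le [Finite V] {m : ℕ} {c : V → Fin m}
    (hc : IsAcyclicColoring G c) : fStrong G 1 ≤ m.choose 2 := by
  calc fStrong G 1 ≤ Fintype.card {p : Sym2 (Fin m) // ¬p.IsDiag} := by
        refine fStrong_le_card (F := fun p => bichromaticPart G c p)
          (fun p => hc.isStrongForest_one_bichromaticPart p) ?_
        rintro e ⟨S, -, he, -⟩
        have hdiag : ¬(e.map c).IsDiag := by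
          induction e with
          | h u v => exact hc.1 u v he
        exact ⟨⟨e.map c, hdiag⟩, mem_forestEdges_bichromaticPart c he⟩
    _ = m.choose 2 := by rw [Sym2.card_subtype_not_diag, Fintype.card_fin]

end StrongForests

theorem fStrong_one_le_of_treewidth_general {V : Type*} [Finite V] {G : SimpleGraph V} {t : ℕ}
    (hG : HasTreewidthAtMost G t) : fStrong G 1 ≤ (t + 1).choose 2 := by
  obtain ⟨c, hc⟩ := hG.exists_isAcyclicColoring
  exact hc.fStrong_one_le

/-- Every finite simple graph `G` of tree-width `t ≥ 2` has induced
arboricity `f₁(G) ≤ (t+1 choose 2)`. -/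
theorem fStrong_one_le_of_treewidth {V : Type} [Fintype V] (G : SimpleGraph V) (t : ℕ)
    (ht : 2 ≤ t) (htw : treewidth G = t) :
    fStrong G 1 ≤ (t + 1).choose 2 :=
  fStrong_one_le_of_treewidth_general (htw ▸ hasTreewidthAtMost_treewidth G)

end InducedArboricity
end
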